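/- Let T < ∞, let a ∈ (0,1), and let (f,p) be a solution of problem (P) on (0,T] with initial datum f_I satisfying conditions (i)–(iii). Then there exists ε > 0 (depending on T and the solution) such that p(t) ∈ [−1+ε, 1−ε] for all t ∈ (0,T]. -/

import Mathlib

open MeasureTheory

/-- The 1D heat kernel `K(x,t) = (4πt)^{-1/2} exp(-x²/(4t))`. -/
noncomputable def heatK (x t : ℝ) : ℝ :=
  (Real.sqrt (4 * Real.pi * t))⁻¹ * Real.exp (-(x ^ 2) / (4 * t))

/-- The Neumann heat kernel on `[-1,1]`:
`Γ(x,x';t) = Σ_{k∈ℤ} K(x − (2k + (−1)^{|k|} x'), t)`. -/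
noncomputable def heatGamma (x x' t : ℝ) : ℝ :=
  ∑' k : ℤ, heatK (x - (2 * (k : ℝ) + (-1 : ℝ) ^ k.natAbs * x')) t

/-- The flux `λ(s) = −∂ₓ f(p(s), s)` at the free boundary. -/
noncomputable def flux (f : ℝ → ℝ → ℝ) (p : ℝ → ℝ) (s : ℝ) : ℝ :=
  -deriv (fun x => f x s) (p s)

/-- `ā(s) = min {a, 1 − p(s), 1 + p(s)}`. -/
noncomputable def abar (a : ℝ) (p : ℝ → ℝ) (s : ℝ) : ℝ :=
  min a (min (1 - p s) (1 + p s))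

/-- The sup norm `‖h‖_{L^∞(−1,1)}` (for continuous `h`). -/
noncomputable def supNorm (h : ℝ → ℝ) : ℝ := ⨆ x : Set.Icc (-1:ℝ) 1, |h x.1|

/-- Conditions (i)–(iii) on the initial datum `f_I ∈ C²([−1,1])`:
(i) unique zero `p_I ∈ (−1,1)`, positive to the left, negative to the right;
(ii) Neumann conditions `∂ₓf_I(±1) = 0`;
(iii) `λ_I = −∂ₓ f_I(p_I) > 0` and `−∂ₓ f_I > λ_I/2` on `(p_I − a₀, p_I + a₀)`. -/
structure IsInitialDatum (fI : ℝ → ℝ) (pI a₀ lamI : ℝ) : Prop where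
  smooth : ContDiffOn ℝ 2 fI (Set.Icc (-1) 1)
  pI_mem : pI ∈ Set.Ioo (-1 : ℝ) 1
  zero_at : fI pI = 0
  pos_left : ∀ x ∈ Set.Ico (-1 : ℝ) pI, 0 < fI x
  neg_right : ∀ x ∈ Set.Ioc pI 1, fI x < 0
  neumann_left : derivWithin fI (Set.Icc (-1) 1) (-1) = 0
  neumann_right : derivWithin fI (Set.Icc (-1) 1) 1 = 0
  lamI_eq : lamI = -deriv fI pI
  lamI_pos : 0 < lamI
  slope : ∀ x ∈ Set.Ioo (pI - a₀) (pI + a₀), lamI / 2 < -deriv fI x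

/-- A solution `(f, p)` of problem (P) on the time set `J` with parameter `a` and
initial datum `f_I`: `p` is a continuous curve in `(−1,1)`, `p(t)` is the unique zero
of `f(·,t)` (positive to the left, negative to the right), `f(·,t)` is differentiable
at `p(t)`, the flux is locally integrable on `J`, and the Duhamel identity holds. -/
structure IsSolutionP (a : ℝ) (fI : ℝ → ℝ) (J : Set ℝ) (f : ℝ → ℝ → ℝ) (p : ℝ → ℝ) : Prop where
  p_cont : ContinuousOn p J
  p_mem : ∀ t ∈ J, p t ∈ Set.Ioo (-1 : ℝ) 1
  zero_at : ∀ t ∈ J, f (p t) t = 0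
  pos_left : ∀ t ∈ J, ∀ x ∈ Set.Ico (-1 : ℝ) (p t), 0 < f x t
  neg_right : ∀ t ∈ J, ∀ x ∈ Set.Ioc (p t) 1, f x t < 0
  diff_at : ∀ t ∈ J, DifferentiableAt ℝ (fun x => f x t) (p t)
  flux_loc_int : LocallyIntegrableOn (flux f p) J
  duhamel : ∀ t ∈ J, ∀ x ∈ Set.Icc (-1 : ℝ) 1,
      f x t = (∫ x' in (-1 : ℝ)..1, heatGamma x x' t * fI x')
        + ∫ s in (0 : ℝ)..t,
            (heatGamma x (p s - abar a p s) (t - s)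
              - heatGamma x (p s + abar a p s) (t - s)) * flux f p s

/-- The Duhamel iterate with data `(p_n, λ_n)` and initial datum `f_I`. -/
noncomputable def duhamelIterate (a : ℝ) (fI pn lamn : ℝ → ℝ) (x t : ℝ) : ℝ :=
  (∫ x' in (-1 : ℝ)..1, heatGamma x x' t * fI x')
    + ∫ s in (0 : ℝ)..t,
        (heatGamma x (pn s - a) (t - s) - heatGamma x (pn s + a) (t - s)) * lamn s


lemma sum_bd (k : ℕ) {c : ℝ} (hc : 0 < c) (R : ℝ) :
    Summable (fun n : ℤ => (|(n:ℝ)|) ^ k * Real.exp (-(c * (n:ℝ)^2) + R * |(n:ℝ)|)) := by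
  have h := summable_pow_mul_jacobiTheta₂_term_bound (R / (2 * Real.pi)) (T := c / Real.pi)
    (by positivity) k
  refine h.congr (fun n => ?_)
  have : -(c * (n:ℝ)^2) + R * |(n:ℝ)| =
    -Real.pi * (c / Real.pi * (n:ℝ) ^ 2 - 2 * (R / (2 * Real.pi)) * |(n:ℝ)|) := by
    field_simp
    ring
  rw [this]
  push_cast
  rfl

lemma sum_bd_nat (k : ℕ) {c : ℝ} (hc : 0 < c) (R : ℝ) :
    Summable (fun n : ℕ => (n : ℝ) ^ k * Real.exp (-(c * (n:ℝ)^2) + R * (n:ℝ))) := by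
  have h := (sum_bd k hc R).comp_injective (Nat.cast_injective : Function.Injective ((↑) : ℕ → ℤ))
  refine h.congr (fun n => ?_)
  simp

lemma heatK_summable4 (u t : ℝ) : Summable (fun j : ℤ => heatK (u - 4 * j) t) := by
  rcases le_or_gt t 0 with ht | ht
  · have : ∀ x, heatK x t = 0 := fun x => by
      unfold heatK
      rw [Real.sqrt_eq_zero_of_nonpos (by nlinarith [Real.pi_pos])]; simp
    simp [this, summable_zero]
  · unfold heatK
    apply Summable.mul_left
    have h := (sum_bd 0 (c := 4 / t) (by positivity) (2 * |u| / t))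
    refine Summable.of_nonneg_of_le (fun _ => (Real.exp_pos _).le) (fun j => ?_) h
    simp only [pow_zero, one_mul]
    apply Real.exp_le_exp.mpr
    have h1 : u * j ≤ |u| * |(j:ℝ)| := by rw [← abs_mul]; exact le_abs_self _
    have : -(u - 4 * (j:ℝ)) ^ 2 / (4 * t) = (-(4*(j:ℝ)^2) + 2 * (u * j) - u^2/4) / t := by
      field_simp; ring
    rw [this]
    have : -(4 / t * (j:ℝ) ^ 2) + 2 * |u| / t * |(j:ℝ)| = (-(4*(j:ℝ)^2) + 2 * (|u| * |(j:ℝ)|)) / t := by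
      field_simp
    rw [this]
    gcongr
    nlinarith [sq_nonneg u]

lemma poisson4 (u : ℝ) {t : ℝ} (ht : 0 < t) :
    ∑' j : ℤ, heatK (u - 4 * j) t =
      ∑' n : ℤ, (1/4 : ℝ) * (Real.exp (-(Real.pi^2 * t / 4 * (n:ℝ)^2)) * Real.cos (n * (Real.pi * u / 2))) := by
  have h := Complex.tsum_exp_neg_quadratic (a := ((Real.pi * t / 4 : ℝ) : ℂ))
    (by rw [Complex.ofReal_re]; positivity) (Complex.I * (u / 4 : ℝ))
  have hL : ∀ n : ℤ, Complex.exp (-Real.pi / ((Real.pi * t / 4 : ℝ) : ℂ) *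
      (n + Complex.I * (Complex.I * (u / 4 : ℝ))) ^ 2)
      = ((Real.exp (-((u - 4 * n) ^ 2) / (4 * t)) : ℝ) : ℂ) := by
    intro n
    rw [Complex.ofReal_exp]
    congr 1
    have : Complex.I * (Complex.I * ((u / 4 : ℝ):ℂ)) = -((u/4 : ℝ):ℂ) := by
      rw [← mul_assoc, Complex.I_mul_I]; ring
    rw [this]
    have ht' : (t:ℂ) ≠ 0 := by exact_mod_cast ht.ne'
    have hp : (Real.pi:ℂ) ≠ 0 := by exact_mod_cast Real.pi_ne_zero
    push_cast
    field_simp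
    ring
  simp only [hL] at h
  rw [← Complex.ofReal_tsum] at h
  have ha : ((Real.pi * t / 4 : ℝ) : ℂ) ^ (1/2 : ℂ) = ((Real.sqrt (Real.pi * t / 4) : ℝ) : ℂ) := by
    rw [Real.sqrt_eq_rpow, Complex.ofReal_cpow (by positivity)]
    norm_num
  rw [ha] at h
  have h2 := congrArg Complex.re h
  have hs : Real.sqrt (4 * Real.pi * t) = 4 * Real.sqrt (Real.pi * t / 4) := by
    rw [show 4 * Real.pi * t = 4^2 * (Real.pi * t / 4) by ring, Real.sqrt_mul (by positivity),
      Real.sqrt_sq (by norm_num)]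
  have hpos : 0 < Real.sqrt (Real.pi * t / 4) := Real.sqrt_pos.mpr (by positivity)
  rw [← Complex.ofReal_one, ← Complex.ofReal_div, ← Complex.ofReal_mul, Complex.ofReal_re] at h2
  have hre : ∀ n : ℤ, (Complex.exp (-Real.pi * ((Real.pi * t / 4 : ℝ) : ℂ) * n ^ 2
      + 2 * Real.pi * (Complex.I * (u / 4 : ℝ)) * n)).re
      = Real.exp (-(Real.pi^2 * t / 4 * (n:ℝ)^2)) * Real.cos (n * (Real.pi * u / 2)) := by
    intro n
    have : (-Real.pi * ((Real.pi * t / 4 : ℝ) : ℂ) * n ^ 2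
      + 2 * Real.pi * (Complex.I * (u / 4 : ℝ)) * n) =
      ((-(Real.pi^2 * t / 4 * (n:ℝ)^2) : ℝ) : ℂ) + ((n * (Real.pi * u / 2) : ℝ) : ℂ) * Complex.I := by
      push_cast; ring
    rw [this, Complex.exp_add, ← Complex.ofReal_exp, Complex.re_ofReal_mul, Complex.exp_ofReal_mul_I_re]
  have hsumC : Summable (fun n : ℤ => (Complex.exp (-Real.pi * ((Real.pi * t / 4 : ℝ) : ℂ) * n ^ 2
      + 2 * Real.pi * (Complex.I * (u / 4 : ℝ)) * n))) := by
    apply Summable.of_norm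
    have h0 := sum_bd 0 (c := Real.pi^2 * t / 4) (by positivity) 0
    refine h0.congr (fun n => ?_)
    rw [Complex.norm_exp]
    have : (-Real.pi * ((Real.pi * t / 4 : ℝ) : ℂ) * n ^ 2
      + 2 * Real.pi * (Complex.I * (u / 4 : ℝ)) * n) =
      ((-(Real.pi^2 * t / 4 * (n:ℝ)^2) : ℝ) : ℂ) + ((n * (Real.pi * u / 2) : ℝ) : ℂ) * Complex.I := by
      push_cast; ring
    rw [this, Complex.add_re, Complex.re_ofReal_mul, Complex.ofReal_re, Complex.I_re]
    simp
  rw [Complex.re_tsum hsumC] at h2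
  simp only [hre] at h2
  rw [tsum_mul_left, h2]
  unfold heatK
  rw [tsum_mul_left, hs]
  field_simp

lemma hasSum_int_eo {f : ℤ → ℝ} {m m' : ℝ} (he : HasSum (fun k => f (2 * k)) m)
    (ho : HasSum (fun k => f (2 * k + 1)) m') : HasSum f (m + m') := by
  have h2 : Function.Injective (fun k : ℤ => 2 * k) := fun a b h => by simpa using h
  have h3 : Function.Injective (fun k : ℤ => 2 * k + 1) := fun a b h => by simpa using h
  have he' := h2.hasSum_range_iff.mpr he
  have ho' := h3.hasSum_range_iff.mpr ho
  refine he'.add_isCompl ?_ ho'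
  simpa [Function.comp_def] using Int.isCompl_even_odd

lemma gam_image (x y t : ℝ) : HasSum (fun k : ℤ => heatK (x - (2 * (k : ℝ) + (-1 : ℝ) ^ k.natAbs * y)) t)
    (∑' j : ℤ, heatK ((x - y) - 4 * j) t + ∑' j : ℤ, heatK ((x + y - 2) - 4 * j) t) := by
  apply hasSum_int_eo
  · convert (heatK_summable4 (x-y) t).hasSum using 2 with k
    have : Even (2 * k).natAbs := Int.natAbs_even.mpr (even_two_mul k)
    rw [this.neg_one_pow]; push_cast; ring_nf
  · convert (heatK_summable4 (x+y-2) t).hasSum using 2 with k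
    have : Odd (2 * k + 1).natAbs := Int.natAbs_odd.mpr (odd_two_mul_add_one k)
    rw [this.neg_one_pow]; push_cast; ring_nf

noncomputable def ang (x : ℝ) : ℝ := Real.pi * (x - 1) / 2
noncomputable def ee (t : ℝ) (n : ℕ) : ℝ := Real.exp (-(Real.pi^2 * t / 4 * (n:ℝ)^2))

lemma ee_pos (t : ℝ) (n : ℕ) : 0 < ee t n := Real.exp_pos _

lemma ee_sum (k : ℕ) {t : ℝ} (ht : 0 < t) : Summable (fun n : ℕ => (n:ℝ)^k * ee t n) := by
  simpa [ee] using sum_bd_nat k (c := Real.pi^2 * t / 4) (by positivity) 0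

lemma gam_fourier (x y : ℝ) {t : ℝ} (ht : 0 < t) :
    HasSum (fun n : ℕ => ee t n * (Real.cos (n * ang x) * Real.cos (n * ang y)))
      (heatGamma x y t + 1/2) := by
  have h1 : heatGamma x y t = _ := (gam_image x y t).tsum_eq
  rw [poisson4 _ ht, poisson4 _ ht] at h1
  have hs : ∀ u : ℝ, Summable (fun n : ℤ => (1/4 : ℝ) * (Real.exp (-(Real.pi^2 * t / 4 * (n:ℝ)^2)) * Real.cos (n * (Real.pi * u / 2)))) := by
    intro u
    apply Summable.mul_left
    have h0 := sum_bd 0 (c := Real.pi^2 * t / 4) (by positivity) 0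
    refine Summable.of_norm_bounded h0 (fun n => ?_)
    rw [norm_mul, Real.norm_eq_abs, Real.norm_eq_abs, Real.abs_exp]
    simp only [pow_zero, one_mul, zero_mul, add_zero]
    exact mul_le_of_le_one_right (Real.exp_pos _).le (Real.abs_cos_le_one _)
  have h2 := ((hs (x-y)).hasSum.add (hs (x+y-2)).hasSum).nat_add_neg
  rw [← h1] at h2
  convert h2 using 2 with n
  · have e1 : (n:ℝ) * (Real.pi * (x-y) / 2) = n * ang x - n * ang y := by unfold ang; ring
    have e2 : (n:ℝ) * (Real.pi * (x+y-2) / 2) = n * ang x + n * ang y := by unfold ang; ring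
    push_cast
    simp only [neg_mul, Real.cos_neg, e1, e2, Real.cos_sub, Real.cos_add, neg_sq]
    unfold ee
    ring
  · simp; norm_num

noncomputable def SS : ℕ → ℝ → ℝ
  | 0, _ => 0
  | (n+1), A => Real.cos A * SS n A + Real.cos (n * A)

lemma SS_sin (n : ℕ) (A : ℝ) : SS n A * Real.sin A = Real.sin (n * A) := by
  induction n with
  | zero => simp [SS]
  | succ n ih =>
    have : ((n+1 : ℕ):ℝ) * A = n * A + A := by push_cast; ring
    rw [this, Real.sin_add, ← ih]; simp only [SS]; ring

lemma SS_abs (n : ℕ) (A : ℝ) : |SS n A| ≤ n := by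
  induction n with
  | zero => simp [SS]
  | succ n ih =>
    simp only [SS]
    refine (abs_add_le _ _).trans ?_
    rw [abs_mul]
    have h1 := Real.abs_cos_le_one A
    have h2 := Real.abs_cos_le_one (n * A)
    push_cast
    nlinarith [abs_nonneg (SS n A), abs_nonneg (Real.cos A)]

lemma SS_cont (n : ℕ) : Continuous (SS n) := by
  induction n with
  | zero => exact continuous_const
  | succ n ih =>
    change Continuous (fun A => Real.cos A * SS n A + Real.cos (n * A))
    fun_prop

lemma ee_anti {t s : ℝ} (h : s ≤ t) (n : ℕ) : ee t n ≤ ee s n := by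
  unfold ee
  apply Real.exp_le_exp.mpr
  gcongr

lemma ee_le_one {t : ℝ} (h : 0 ≤ t) (n : ℕ) : ee t n ≤ 1 := by
  unfold ee
  apply Real.exp_le_one_iff.mpr
  have : 0 ≤ Real.pi^2 * t / 4 * (n:ℝ)^2 := by positivity
  linarith

noncomputable def qterm (x A B τ : ℝ) (n : ℕ) : ℝ :=
  ee τ n * (Real.cos (n * ang x) * (SS n A * SS n B))

noncomputable def QQ (x A B τ : ℝ) : ℝ := ∑' n, qterm x A B τ n

lemma qterm_bd (x A B : ℝ) {τ τ0 : ℝ} (h : τ0 ≤ τ) (n : ℕ) :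
    ‖qterm x A B τ n‖ ≤ (n:ℝ)^2 * ee τ0 n := by
  unfold qterm
  rw [Real.norm_eq_abs, abs_mul, abs_mul, abs_mul, abs_of_pos (ee_pos _ _)]
  have h1 := Real.abs_cos_le_one (n * ang x)
  have h2 : |SS n A| * |SS n B| ≤ n * n :=
    mul_le_mul (SS_abs n A) (SS_abs n B) (abs_nonneg _) (by positivity)
  have h3 : |Real.cos (n * ang x)| * (|SS n A| * |SS n B|) ≤ 1 * (n * n) :=
    mul_le_mul h1 h2 (by positivity) (by positivity)
  have h4 := mul_le_mul (ee_anti h n) h3 (by positivity) (ee_pos _ _).le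
  linarith

lemma qterm_summable (x A B : ℝ) {τ : ℝ} (h : 0 < τ) : Summable (qterm x A B τ) :=
  Summable.of_norm_bounded (ee_sum 2 h) (qterm_bd x A B le_rfl)

lemma QQ_bd (x A B : ℝ) {τ τ0 : ℝ} (h0 : 0 < τ0) (h : τ0 ≤ τ) :
    |QQ x A B τ| ≤ ∑' n : ℕ, (n:ℝ)^2 * ee τ0 n :=
  tsum_of_norm_bounded (ee_sum 2 h0).hasSum (qterm_bd x A B h)

lemma QQ_cont (x : ℝ) {τ0 : ℝ} (h0 : 0 < τ0) :
    ContinuousOn (fun q : ℝ × ℝ × ℝ => QQ x q.1 q.2.1 q.2.2) {q | τ0 ≤ q.2.2} := by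
  unfold QQ
  refine continuousOn_tsum (fun n => ?_) (ee_sum 2 h0) (fun n q hq => qterm_bd x _ _ hq n)
  apply Continuous.continuousOn
  have := SS_cont n
  unfold qterm ee
  fun_prop

lemma QQ_cont_x (A B : ℝ) {τ : ℝ} (h0 : 0 < τ) : Continuous (fun x => QQ x A B τ) := by
  unfold QQ
  refine continuous_tsum (fun n => ?_) (ee_sum 2 h0) (fun n x => qterm_bd x A B le_rfl n)
  unfold qterm ang
  fun_prop

lemma gdiff (x p b : ℝ) {τ : ℝ} (h : 0 < τ) :
    heatGamma x (p - b) τ - heatGamma x (p + b) τ =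
      (2 * Real.sin (ang p) * Real.sin (Real.pi * b / 2)) * QQ x (ang p) (Real.pi * b / 2) τ := by
  have h1 := (gam_fourier x (p - b) h).sub (gam_fourier x (p + b) h)
  have h2 := (qterm_summable x (ang p) (Real.pi * b / 2) h).hasSum.mul_left
    (2 * Real.sin (ang p) * Real.sin (Real.pi * b / 2))
  have : heatGamma x (p - b) τ - heatGamma x (p + b) τ =
    (heatGamma x (p - b) τ + 1/2) - (heatGamma x (p + b) τ + 1/2) := by ring
  rw [this]
  refine h1.unique ?_
  refine h2.congr_fun ?_ |> fun h => h
  intro n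
  have e1 : (n:ℝ) * ang (p - b) = n * ang p - n * (Real.pi * b / 2) := by unfold ang; ring
  have e2 : (n:ℝ) * ang (p + b) = n * ang p + n * (Real.pi * b / 2) := by unfold ang; ring
  rw [e1, e2, Real.cos_sub, Real.cos_add, ← SS_sin, ← SS_sin]
  unfold qterm
  ring

lemma gam_cont (x : ℝ) {τ : ℝ} (h : 0 < τ) : Continuous (fun y => heatGamma x y τ) := by
  have : (fun y => heatGamma x y τ) =
      fun y => (∑' n : ℕ, ee τ n * (Real.cos (n * ang x) * Real.cos (n * ang y))) - 1/2 := by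
    funext y; rw [(gam_fourier x y h).tsum_eq]; ring
  rw [this]
  refine Continuous.sub (continuous_tsum (u := fun n : ℕ => (n:ℝ)^0 * ee τ n) (fun n => ?_) (ee_sum 0 h) (fun n y => ?_)) continuous_const
  · unfold ang; fun_prop
  · rw [Real.norm_eq_abs, abs_mul, abs_mul, abs_of_pos (ee_pos _ _), pow_zero, one_mul]
    exact mul_le_of_le_one_right (ee_pos _ _).le
      (mul_le_one₀ (Real.abs_cos_le_one _) (abs_nonneg _) (Real.abs_cos_le_one _))

lemma gam_symm (x y : ℝ) {τ : ℝ} (h : 0 < τ) : heatGamma x y τ = heatGamma y x τ := by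
  have h1 := gam_fourier x y h
  have h2 := gam_fourier y x h
  have : (fun n : ℕ => ee τ n * (Real.cos (n * ang x) * Real.cos (n * ang y))) =
    (fun n : ℕ => ee τ n * (Real.cos (n * ang y) * Real.cos (n * ang x))) := by
    funext n; ring
  rw [this] at h1
  linarith [h1.unique h2]

lemma heatK_nonneg (x t : ℝ) : 0 ≤ heatK x t := by unfold heatK; positivity
lemma gam_nonneg (x y t : ℝ) : 0 ≤ heatGamma x y t := tsum_nonneg (fun _ => heatK_nonneg _ _)

lemma hsi (F : ℕ → ℝ → ℝ) (u : ℕ → ℝ) (a b : ℝ) (hF : ∀ n, Continuous (F n)) (hu : Summable u)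
    (hb : ∀ n x, |F n x| ≤ u n) :
    HasSum (fun n => ∫ x in a..b, F n x) (∫ x in a..b, ∑' n, F n x) := by
  refine intervalIntegral.hasSum_integral_of_dominated_convergence (fun n _ => u n)
    (fun n => (hF n).aestronglyMeasurable) (fun n => Filter.Eventually.of_forall fun x _ => hb n x)
    (Filter.Eventually.of_forall fun x _ => hu) intervalIntegrable_const
    (Filter.Eventually.of_forall fun x _ => ?_)
  exact (Summable.of_norm_bounded hu (fun n => hb n x)).hasSum

lemma gam_mass (y : ℝ) {τ : ℝ} (h : 0 < τ) : ∫ x in (-1:ℝ)..1, heatGamma x y τ = 1 := by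
  have h1 := hsi (fun (n:ℕ) x => ee τ n * (Real.cos (n * ang x) * Real.cos (n * ang y)))
    (fun n => (n:ℝ)^0 * ee τ n) (-1) 1 (fun n => by unfold ang; fun_prop) (ee_sum 0 h) (fun n x => by
      rw [abs_mul, abs_mul, abs_of_pos (ee_pos _ _), pow_zero, one_mul]
      exact mul_le_of_le_one_right (ee_pos _ _).le
        (mul_le_one₀ (Real.abs_cos_le_one _) (abs_nonneg _) (Real.abs_cos_le_one _)))
  have h0 : ∀ n : ℕ, n ≠ 0 →
      ∫ x in (-1:ℝ)..1, ee τ n * (Real.cos (n * ang x) * Real.cos (n * ang y)) = 0 := by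
    intro n hn
    have hn' : (n:ℝ) ≠ 0 := by exact_mod_cast hn
    have hp := Real.pi_ne_zero
    have hd : ∀ x ∈ Set.uIcc (-1:ℝ) 1, HasDerivAt (fun x => ee τ n * (Real.sin (n * ang x) / (n * (Real.pi / 2)) * Real.cos (n * ang y)))
        (ee τ n * (Real.cos (n * ang x) * Real.cos (n * ang y))) x := by
      intro x _
      have ha : HasDerivAt (fun x => (n:ℝ) * ang x) (n * (Real.pi / 2)) x := by
        unfold ang
        have := ((((hasDerivAt_id x).sub_const 1).const_mul Real.pi).div_const 2).const_mul (n:ℝ)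
        simpa using this
      have := (((ha.sin).div_const (n * (Real.pi / 2))).mul_const (Real.cos (n * ang y))).const_mul (ee τ n)
      refine this.congr_deriv ?_
      field_simp
    rw [intervalIntegral.integral_eq_sub_of_hasDerivAt hd (by
      apply Continuous.intervalIntegrable; unfold ang; fun_prop)]
    have e1 : (n:ℝ) * ang 1 = 0 := by unfold ang; ring
    have e2 : (n:ℝ) * ang (-1) = -(n * Real.pi) := by unfold ang; ring
    rw [e1, e2, Real.sin_neg, Real.sin_nat_mul_pi]; simp
  have h2 := h1.unique (hasSum_single 0 (fun n hn => h0 n hn))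
  have h3 : ∀ x, ∑' n : ℕ, ee τ n * (Real.cos (n * ang x) * Real.cos (n * ang y)) =
    heatGamma x y τ + 1/2 := fun x => (gam_fourier x y h).tsum_eq
  simp only [h3] at h2
  rw [intervalIntegral.integral_add] at h2
  · simp [ee] at h2; norm_num at h2; linarith
  · have : (fun x => heatGamma x y τ) = fun x => heatGamma y x τ := by
      funext x; exact gam_symm x y h
    rw [this]
    exact (gam_cont y h).intervalIntegrable _ _
  · exact intervalIntegrable_const

lemma QQ_ne (A B c d : ℝ) {τ : ℝ} (h : 0 < τ) (hcd : c < d) : ∃ x ∈ Set.Ioo c d, QQ x A B τ ≠ 0 := by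
  by_contra! hz
  let F : ℂ → ℂ := fun z => ∑' n : ℕ, (ee τ n : ℂ) * (Complex.cos (n * z) * ((SS n A : ℂ) * (SS n B : ℂ)))
  have hF : ∀ y : ℝ, F y = ((∑' n : ℕ, ee τ n * (Real.cos (n * y) * (SS n A * SS n B)) : ℝ) : ℂ) := by
    intro y
    simp only [F]
    push_cast
    rfl
  have hdiff : Differentiable ℂ F := by
    intro z0
    have hball : DifferentiableOn ℂ F (Metric.ball 0 (‖z0‖ + 1)) := by
      refine Complex.differentiableOn_tsum_of_summable_norm
        (u := fun n : ℕ => (n:ℝ)^2 * Real.exp (-(Real.pi^2 * τ / 4 * (n:ℝ)^2) + (‖z0‖ + 1) * n))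
        (sum_bd_nat 2 (by positivity) _) (fun n => ?_) Metric.isOpen_ball (fun n z hz => ?_)
      · fun_prop
      · have hz' : ‖z‖ ≤ ‖z0‖ + 1 := by
          have := Metric.mem_ball.mp hz
          rw [dist_zero_right] at this; exact this.le
        have hcos : ‖Complex.cos (n * z)‖ ≤ Real.exp ((‖z0‖ + 1) * n) := by
          rw [Complex.cos, norm_div, Complex.norm_ofNat]
          have a1 : ‖Complex.exp (n * z * Complex.I)‖ ≤ Real.exp ((‖z0‖ + 1) * n) := by
            refine (Complex.norm_exp_le_exp_norm _).trans (Real.exp_le_exp.mpr ?_)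
            simp only [norm_mul, Complex.norm_I, mul_one, Complex.norm_natCast]
            nlinarith [(Nat.cast_nonneg n : (0:ℝ) ≤ n)]
          have a2 : ‖Complex.exp (-(n * z) * Complex.I)‖ ≤ Real.exp ((‖z0‖ + 1) * n) := by
            refine (Complex.norm_exp_le_exp_norm _).trans (Real.exp_le_exp.mpr ?_)
            simp only [norm_mul, norm_neg, Complex.norm_I, mul_one, Complex.norm_natCast]
            nlinarith [(Nat.cast_nonneg n : (0:ℝ) ≤ n)]
          have := norm_add_le (Complex.exp (n * z * Complex.I)) (Complex.exp (-(n * z) * Complex.I))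
          linarith
        rw [norm_mul, norm_mul, norm_mul, Complex.norm_real, Complex.norm_real, Complex.norm_real,
          Real.norm_eq_abs, Real.norm_eq_abs, Real.norm_eq_abs, abs_of_pos (ee_pos _ _), Real.exp_add]
        have h2 : |SS n A| * |SS n B| ≤ n * n :=
          mul_le_mul (SS_abs n A) (SS_abs n B) (abs_nonneg _) (by positivity)
        have h3 := mul_le_mul hcos h2 (by positivity) (by positivity)
        have h4 := mul_le_mul_of_nonneg_left h3 (ee_pos τ n).le
        unfold ee at h4 ⊢
        linarith
    exact hball.differentiableAt (Metric.isOpen_ball.mem_nhds (by simp))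
  have han : AnalyticOnNhd ℂ F Set.univ := hdiff.differentiableOn.analyticOnNhd isOpen_univ
  set m := (c + d) / 2 with hm
  have hreal : ∀ x ∈ Set.Ioo c d, F (ang x) = 0 := by
    intro x hx
    rw [hF]
    exact_mod_cast hz x hx
  have hfreq : ∃ᶠ z in nhdsWithin ((ang m : ℝ) : ℂ) {((ang m : ℝ) : ℂ)}ᶜ, F z = 0 := by
    have ht : Filter.Tendsto (fun x : ℝ => ((ang x : ℝ) : ℂ)) (nhdsWithin m {m}ᶜ)
        (nhdsWithin ((ang m : ℝ) : ℂ) {((ang m : ℝ) : ℂ)}ᶜ) := by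
      apply tendsto_nhdsWithin_of_tendsto_nhds_of_eventually_within
      · have : Continuous (fun x : ℝ => ((ang x : ℝ) : ℂ)) := by unfold ang; fun_prop
        exact (this.tendsto m).mono_left nhdsWithin_le_nhds
      · filter_upwards [self_mem_nhdsWithin] with x hx
        simp only [Set.mem_compl_iff, Set.mem_singleton_iff, Complex.ofReal_inj] at hx ⊢
        intro h; apply hx
        unfold ang at h
        have hp := Real.pi_pos
        have : Real.pi * (x - m) = 0 := by linarith
        rcases mul_eq_zero.mp this with h | h <;> linarith
    refine ht.frequently ?_
    apply Filter.Eventually.frequently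
    filter_upwards [nhdsWithin_le_nhds (Ioo_mem_nhds (show c < m by linarith) (show m < d by linarith))] with x hx
    exact hreal x hx
  have hzero := han.eqOn_zero_of_preconnected_of_frequently_eq_zero isPreconnected_univ (Set.mem_univ _) hfreq
  have hR : ∀ y : ℝ, ∑' n : ℕ, ee τ n * (Real.cos (n * y) * (SS n A * SS n B)) = 0 := by
    intro y
    have := hzero (Set.mem_univ (y:ℂ))
    rw [hF, Pi.zero_apply] at this
    exact_mod_cast this
  have hbd : ∀ (n : ℕ) (y : ℝ), |ee τ n * (Real.cos (n * y) * (SS n A * SS n B)) * Real.cos y| ≤ (n:ℝ)^2 * ee τ n := by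
    intro n y
    rw [abs_mul, abs_mul, abs_mul, abs_mul, abs_of_pos (ee_pos _ _)]
    have h1 := Real.abs_cos_le_one (n * y)
    have h1' := Real.abs_cos_le_one y
    have h2 : |SS n A| * |SS n B| ≤ n * n :=
      mul_le_mul (SS_abs n A) (SS_abs n B) (abs_nonneg _) (by positivity)
    have h3 : |Real.cos (n * y)| * (|SS n A| * |SS n B|) ≤ 1 * (n * n) :=
      mul_le_mul h1 h2 (by positivity) (by positivity)
    have h4 := mul_le_mul_of_nonneg_left h3 (ee_pos τ n).le
    have h5 := mul_le_of_le_one_right (a := ee τ n * (|Real.cos (n * y)| * (|SS n A| * |SS n B|))) (by have := (ee_pos τ n).le; positivity) h1'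
    linarith
  have h1 := hsi (fun (n:ℕ) y => ee τ n * (Real.cos (n * y) * (SS n A * SS n B)) * Real.cos y)
    (fun n => (n:ℝ)^2 * ee τ n) 0 Real.pi (fun n => by fun_prop) (ee_sum 2 h) hbd
  have h0 : ∀ n : ℕ, n ≠ 1 →
      ∫ y in (0:ℝ)..Real.pi, ee τ n * (Real.cos (n * y) * (SS n A * SS n B)) * Real.cos y = 0 := by
    intro n hn
    have hn1 : (n:ℝ) - 1 ≠ 0 := by
      intro h; apply hn; exact_mod_cast (by linarith : (n:ℝ) = 1)
    have hn2 : (n:ℝ) + 1 ≠ 0 := by positivity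
    have hd : ∀ x ∈ Set.uIcc (0:ℝ) Real.pi, HasDerivAt (fun y => ee τ n * (SS n A * SS n B) / 2 *
          (Real.sin (((n:ℝ) + 1) * y) / (n + 1) + Real.sin (((n:ℝ) - 1) * y) / (n - 1)))
        (ee τ n * (Real.cos (n * x) * (SS n A * SS n B)) * Real.cos x) x := by
      intro x _
      have a1 : HasDerivAt (fun x => ((n:ℝ) + 1) * x) (n+1) x := by
        simpa using (hasDerivAt_id x).const_mul ((n:ℝ) + 1)
      have a2 : HasDerivAt (fun x => ((n:ℝ) - 1) * x) (n-1) x := by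
        simpa using (hasDerivAt_id x).const_mul ((n:ℝ) - 1)
      have := ((a1.sin.div_const (n+1)).add (a2.sin.div_const (n-1))).const_mul (ee τ n * (SS n A * SS n B) / 2)
      refine this.congr_deriv ?_
      rw [mul_div_cancel_right₀ _ hn2, mul_div_cancel_right₀ _ hn1, add_mul, sub_mul, one_mul,
        Real.cos_add, Real.cos_sub]
      ring
    rw [intervalIntegral.integral_eq_sub_of_hasDerivAt hd (by
      apply Continuous.intervalIntegrable; fun_prop)]
    have e1 : Real.sin (((n:ℝ) + 1) * Real.pi) = 0 := by
      exact_mod_cast Real.sin_nat_mul_pi (n+1)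
    have e2 : Real.sin (((n:ℝ) - 1) * Real.pi) = 0 := by
      exact_mod_cast Real.sin_int_mul_pi ((n:ℤ)-1)
    rw [e1, e2]; simp
  have h2 := h1.unique (hasSum_single 1 (fun n hn => h0 n hn))
  have hS : ∀ A, SS 1 A = 1 := fun A => by simp [SS]
  have h3 : ∀ y, ∑' n : ℕ, ee τ n * (Real.cos (n * y) * (SS n A * SS n B)) * Real.cos y = 0 := by
    intro y; rw [tsum_mul_right, hR]; simp
  simp only [h3, hS] at h2
  have h4 : ∀ y : ℝ, ee τ 1 * (Real.cos ((1:ℕ) * y) * (1 * 1)) * Real.cos y = ee τ 1 * Real.cos y ^ 2 := by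
    intro y; push_cast; rw [one_mul]; ring
  simp only [h4] at h2
  rw [intervalIntegral.integral_const_mul, integral_cos_sq] at h2
  have := ee_pos τ 1
  have hp := Real.pi_pos
  simp only [intervalIntegral.integral_zero, Real.sin_pi, Real.sin_zero, mul_zero, sub_zero, zero_add] at h2
  have : 0 < ee τ 1 * (Real.pi / 2) := by positivity
  linarith

lemma cover (I : Set ℝ) (w lam : ℝ → ℝ) (q : ℝ → ℝ × ℝ × ℝ) (K : Set (ℝ × ℝ × ℝ)) {τ0 : ℝ}
    (h0 : 0 < τ0) (hK : IsCompact K) (hKτ : ∀ k ∈ K, τ0 ≤ k.2.2) (hq : ∀ s ∈ I, q s ∈ K)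
    {c d : ℝ} (hcd : c < d)
    (hint : ∀ x ∈ Set.Ioo c d,
      IntegrableOn (fun s => w s * QQ x (q s).1 (q s).2.1 (q s).2.2 * lam s) I) :
    ∃ g : ℝ → ℝ, IntegrableOn g I ∧ ∀ s ∈ I, |w s * lam s| ≤ g s := by
  have key : ∃ g : ℝ → ℝ, IntegrableOn g I ∧ (∀ s, 0 ≤ g s) ∧
      ∀ s ∈ I, q s ∈ K → |w s * lam s| ≤ g s := by
    refine hK.induction_on (p := fun S => ∃ g : ℝ → ℝ, IntegrableOn g I ∧ (∀ s, 0 ≤ g s) ∧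
      ∀ s ∈ I, q s ∈ S → |w s * lam s| ≤ g s) ?_ ?_ ?_ ?_
    · exact ⟨fun _ => 0, integrableOn_zero, fun _ => le_rfl, fun s _ h => h.elim⟩
    · rintro S S' hSS ⟨g, hg, hg0, hb⟩
      exact ⟨g, hg, hg0, fun s hs h => hb s hs (hSS h)⟩
    · rintro S S' ⟨g, hg, hg0, hb⟩ ⟨g', hg', hg0', hb'⟩
      refine ⟨fun s => g s + g' s, hg.add hg', fun s => add_nonneg (hg0 s) (hg0' s), ?_⟩
      rintro s hs (h | h)
      · linarith [hb s hs h, hg0' s]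
      · linarith [hb' s hs h, hg0 s]
    · intro k hk
      obtain ⟨x, hx, hne⟩ := QQ_ne k.1 k.2.1 c d (lt_of_lt_of_le h0 (hKτ k hk)) hcd
      have hcont : ContinuousOn (fun q : ℝ × ℝ × ℝ => |QQ x q.1 q.2.1 q.2.2|) K :=
        ((QQ_cont x h0).mono hKτ).abs
      have hpos : 0 < |QQ x k.1 k.2.1 k.2.2| := abs_pos.mpr hne
      set e := |QQ x k.1 k.2.1 k.2.2| with he
      have hev := (hcont k hk).eventually (lt_mem_nhds (show e / 2 < e by linarith))
      refine ⟨_, hev, fun s => |w s * QQ x (q s).1 (q s).2.1 (q s).2.2 * lam s| * (2 / e),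
        (hint x hx).abs.mul_const _, fun s => by positivity, ?_⟩
      intro s hs h
      have h' : e / 2 < |QQ x (q s).1 (q s).2.1 (q s).2.2| := h
      have : |w s * QQ x (q s).1 (q s).2.1 (q s).2.2 * lam s| =
        |w s * lam s| * |QQ x (q s).1 (q s).2.1 (q s).2.2| := by
        rw [← abs_mul]; congr 1; ring
      simp only [this]
      have h2 : |w s * lam s| * (e/2) ≤ |w s * lam s| * |QQ x (q s).1 (q s).2.1 (q s).2.2| :=
        mul_le_mul_of_nonneg_left h'.le (abs_nonneg _)
      calc |w s * lam s| = |w s * lam s| * (e/2) * (2 / e) := by field_simp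
        _ ≤ _ := mul_le_mul_of_nonneg_right h2 (by positivity)
  obtain ⟨g, hg, _, hb⟩ := key
  exact ⟨g, hg, fun s hs => hb s hs (hq s hs)⟩

lemma decay (m : ℕ) : ∀ φ : ℝ → ℝ, ContDiff ℝ m φ → HasCompactSupport φ →
    ∃ C, 0 ≤ C ∧ ∀ k : ℝ, k ≠ 0 → ∀ b : ℝ, |∫ x, φ x * Real.cos (k * x + b)| ≤ C / |k| ^ m := by
  induction m with
  | zero =>
    intro φ hφ hc
    have hi : Integrable φ := hφ.continuous.integrable_of_hasCompactSupport hc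
    refine ⟨∫ x, |φ x|, integral_nonneg fun x => abs_nonneg _, fun k _ b => ?_⟩
    rw [pow_zero, div_one]
    rw [← Real.norm_eq_abs]
    refine norm_integral_le_of_norm_le hi.abs (Filter.Eventually.of_forall fun x => ?_)
    rw [norm_mul]
    exact mul_le_of_le_one_right (abs_nonneg _) (Real.abs_cos_le_one _)
  | succ m ih =>
    intro φ hφ hc
    have hd1 : ContDiff ℝ m (deriv φ) := by
      have : ContDiff ℝ ((m:WithTop ℕ∞) + 1) φ := by exact_mod_cast hφ
      exact (contDiff_succ_iff_deriv.mp this).2.2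
    have hdiff : Differentiable ℝ φ := hφ.differentiable (by simp)
    obtain ⟨C, hC, hb⟩ := ih (deriv φ) hd1 hc.deriv
    refine ⟨C, hC, fun k hk b => ?_⟩
    have hv : ∀ x, HasDerivAt (fun x => Real.sin (k * x + b) / k) (Real.cos (k * x + b)) x := by
      intro x
      have a1 : HasDerivAt (fun x => k * x + b) k x := by
        simpa using ((hasDerivAt_id x).const_mul k).add_const b
      refine (a1.sin.div_const k).congr_deriv ?_
      field_simp
    have hI : ∀ (ψ η : ℝ → ℝ), Continuous ψ → HasCompactSupport ψ → Continuous η → Integrable (ψ * η) := by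
      intro ψ η h1 h2 h3
      exact (h1.mul h3).integrable_of_hasCompactSupport h2.mul_right
    have hsin : Continuous (fun x => Real.sin (k * x + b) / k) := by fun_prop
    have hcos : Continuous (fun x => Real.cos (k * x + b)) := by fun_prop
    have := integral_mul_deriv_eq_deriv_mul_of_integrable (u := φ) (u' := deriv φ)
      (v := fun x => Real.sin (k * x + b) / k) (v' := fun x => Real.cos (k * x + b))
      (fun x _ => (hdiff x).hasDerivAt) (fun x _ => hv x)
      (hI _ _ hφ.continuous hc hcos) (hI _ _ hd1.continuous hc.deriv hsin) (hI _ _ hφ.continuous hc hsin)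
    rw [this, abs_neg]
    have e : ∀ x, deriv φ x * (Real.sin (k * x + b) / k) =
        k⁻¹ * (deriv φ x * Real.cos (k * x + (b - Real.pi/2))) := by
      intro x
      rw [← add_sub_assoc, Real.cos_sub_pi_div_two]; field_simp
    simp only [e]
    rw [integral_const_mul, abs_mul, abs_inv, pow_succ]
    have hk' : 0 < |k| := abs_pos.mpr hk
    calc |k|⁻¹ * _ ≤ |k|⁻¹ * (C / |k|^m) := by gcongr; exact hb k hk _
      _ = _ := by field_simp

lemma test_bd (φ : ℝ → ℝ) (hφ : ContDiff ℝ 4 φ) (hc : HasCompactSupport φ) (c d : ℝ)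
    (hs : Function.support φ ⊆ Set.Ioc c d) :
    ∃ C, 0 ≤ C ∧ ∀ A B τ, 0 < τ → |∫ x in c..d, φ x * QQ x A B τ| ≤ C := by
  obtain ⟨C0, hC0, hdec⟩ := decay 4 φ (by exact_mod_cast hφ) hc
  obtain ⟨M, hM⟩ := hφ.continuous.bounded_above_of_compact_support hc
  have hM0 : 0 ≤ M := (norm_nonneg _).trans (hM 0)
  have hcoef : ∀ n : ℕ, n ≠ 0 → |∫ x in c..d, φ x * Real.cos (n * ang x)| ≤ C0 / (n:ℝ)^4 := by
    intro n hn
    have hn' : (0:ℝ) < n := by exact_mod_cast Nat.pos_of_ne_zero hn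
    rw [intervalIntegral.integral_eq_integral_of_support_subset
      ((Function.support_mul_subset_left _ _).trans hs)]
    have hk : (n:ℝ) * (Real.pi/2) ≠ 0 := by positivity
    have := hdec _ hk (-(n * (Real.pi/2)))
    have e : ∀ x, (n:ℝ) * ang x = (n:ℝ) * (Real.pi/2) * x + -(n * (Real.pi/2)) := by
      intro x; unfold ang; ring
    simp only [e]
    refine this.trans ?_
    rw [abs_of_pos (by positivity)]
    gcongr
    have := Real.pi_gt_three
    nlinarith
  have hsum : Summable (fun n : ℕ => C0 * (1 / (n:ℝ)^2)) :=
    (Real.summable_one_div_nat_pow.mpr (by norm_num)).mul_left _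
  refine ⟨∑' n : ℕ, C0 * (1 / (n:ℝ)^2), tsum_nonneg fun n => by positivity, fun A B τ hτ => ?_⟩
  have h1 := hsi (fun n x => φ x * qterm x A B τ n) (fun n => M * ((n:ℝ)^2 * ee τ n)) c d
    (fun n => by
      have := hφ.continuous
      unfold qterm ang; fun_prop) ((ee_sum 2 hτ).mul_left M) (fun n x => by
      rw [abs_mul]
      exact mul_le_mul (hM x) (qterm_bd x A B le_rfl n) (abs_nonneg _) hM0)
  simp only [tsum_mul_left] at h1
  change HasSum _ (∫ x in c..d, φ x * QQ x A B τ) at h1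
  rw [← h1.tsum_eq, ← Real.norm_eq_abs]
  refine tsum_of_norm_bounded hsum.hasSum (fun n => ?_)
  rcases eq_or_ne n 0 with rfl | hn
  · simp [qterm, SS]
  have e : ∀ x, φ x * qterm x A B τ n = (ee τ n * (SS n A * SS n B)) * (φ x * Real.cos (n * ang x)) := by
    intro x; unfold qterm; ring
  simp only [e]
  rw [intervalIntegral.integral_const_mul, Real.norm_eq_abs, abs_mul, abs_mul, abs_mul, abs_of_pos (ee_pos _ _)]
  have hn' : (0:ℝ) < n := by exact_mod_cast Nat.pos_of_ne_zero hn
  have h2 : |SS n A| * |SS n B| ≤ n * n :=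
    mul_le_mul (SS_abs n A) (SS_abs n B) (abs_nonneg _) (by positivity)
  have h3 : ee τ n * (|SS n A| * |SS n B|) ≤ 1 * (n * n) :=
    mul_le_mul (ee_le_one hτ.le n) h2 (by positivity) (by norm_num)
  calc _ ≤ (1 * ((n:ℝ) * n)) * (C0 / (n:ℝ)^4) :=
        mul_le_mul h3 (hcoef n hn) (abs_nonneg _) (by positivity)
    _ = _ := by field_simp

lemma heatK_far {z t : ℝ} (ht : 0 < t) (hz : z ≠ 0) : heatK z t ≤ 4 * Real.sqrt t / z^2 := by
  unfold heatK
  have hz2 : 0 < z^2 := by positivity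
  have h1 : Real.exp (-(z^2) / (4*t)) ≤ 4 * t / z^2 := by
    have := Real.add_one_le_exp (z^2 / (4*t))
    rw [neg_div, Real.exp_neg]
    rw [show 4 * t / z^2 = (z^2/(4*t))⁻¹ by rw [inv_div]]
    apply inv_anti₀ (by positivity); linarith
  have h2 : (Real.sqrt (4 * Real.pi * t))⁻¹ ≤ (Real.sqrt t)⁻¹ := by
    apply inv_anti₀ (Real.sqrt_pos.mpr ht)
    apply Real.sqrt_le_sqrt
    nlinarith [Real.pi_gt_three]
  calc _ ≤ (Real.sqrt t)⁻¹ * (4 * t / z^2) := by gcongr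
    _ = _ := by
      have hs := Real.sqrt_pos.mpr ht
      have : t = Real.sqrt t * Real.sqrt t := (Real.mul_self_sqrt ht.le).symm
      nth_rewrite 2 [this]
      field_simp

lemma summ1 : Summable (fun k : ℤ => 1 / (1 + (k:ℝ)^2)) := by
  have h := Real.summable_one_div_int_pow (p := 2) |>.mpr (by norm_num)
  refine Summable.of_norm_bounded_eventually h ?_
  filter_upwards [(Set.finite_singleton (0:ℤ)).compl_mem_cofinite] with k hk
  have : (k:ℝ) ≠ 0 := by
    simp at hk; exact_mod_cast hk
  rw [Real.norm_of_nonneg (by positivity)]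
  apply one_div_le_one_div_of_le (by positivity); linarith

lemma gam_far (r x y t : ℝ) (hr : 0 < r) (hx : |x| ≤ 1 - r) (hy : |y| ≤ 1) (hxy : r ≤ |x - y|) (ht : 0 < t) :
    heatGamma x y t ≤ (8 / r^2 * ∑' k : ℤ, 1 / (1 + (k:ℝ)^2)) * Real.sqrt t := by
  have hr1 : r ≤ 1 := by linarith [abs_nonneg x]
  rw [mul_comm, ← mul_assoc, ← tsum_mul_left]
  refine Summable.tsum_le_tsum (fun k => ?_) (gam_image x y t).summable (summ1.mul_left _)
  set z := x - (2 * (k : ℝ) + (-1 : ℝ) ^ k.natAbs * y) with hz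
  have hz2 : r^2 * (1 + (k:ℝ)^2) / 2 ≤ z^2 := by
    rcases eq_or_ne k 0 with rfl | hk
    · have : z = x - y := by simp [hz]
      rw [this, ← sq_abs (x-y)]
      have h3 := pow_le_pow_left₀ hr.le hxy 2
      push_cast
      nlinarith [sq_nonneg r]
    · have hk1 : (1:ℝ) ≤ |(k:ℝ)| := by exact_mod_cast Int.one_le_abs hk
      have hy' : |(-1 : ℝ) ^ k.natAbs * y| ≤ 1 := by
        rw [abs_mul, abs_pow, abs_neg, abs_one, one_pow, one_mul]; exact hy
      have h1 : 2 * |(k:ℝ)| ≤ |z| + |x| + |(-1 : ℝ) ^ k.natAbs * y| := by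
        have : 2 * (k:ℝ) = x - z - (-1 : ℝ) ^ k.natAbs * y := by rw [hz]; ring
        have h2 : |2 * (k:ℝ)| = 2 * |(k:ℝ)| := by rw [abs_mul]; norm_num
        rw [← h2, this]
        have := abs_sub (x - z) ((-1 : ℝ) ^ k.natAbs * y)
        have := abs_sub x z
        linarith
      have h2 : r * |(k:ℝ)| ≤ |z| := by nlinarith
      rw [← sq_abs z]
      have h3 : (r * |(k:ℝ)|)^2 ≤ |z|^2 := by
        apply pow_le_pow_left₀ (by positivity) h2
      rw [mul_pow, sq_abs] at h3
      have h4 : 1 ≤ (k:ℝ)^2 := by rw [← sq_abs]; nlinarith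
      nlinarith [sq_nonneg r]
  have hpos : 0 < r^2 * (1 + (k:ℝ)^2) / 2 := by positivity
  have hzne : z ≠ 0 := by
    intro h; rw [h] at hz2; norm_num at hz2; linarith
  refine (heatK_far ht hzne).trans ?_
  calc 4 * Real.sqrt t / z^2 ≤ 4 * Real.sqrt t / (r^2 * (1 + (k:ℝ)^2) / 2) := by gcongr
    _ = _ := by field_simp; norm_num

lemma gam_near (x y t : ℝ) (hxy : |x - y| ≤ Real.sqrt t) (ht : 0 < t) :
    Real.exp (-1) / 4 / Real.sqrt t ≤ heatGamma x y t := by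
  have h0 := (gam_image x y t).summable.le_tsum 0 (fun k _ => heatK_nonneg _ _)
  refine le_trans ?_ h0
  simp only [Int.cast_zero, mul_zero, Int.natAbs_zero, pow_zero, one_mul, zero_add]
  unfold heatK
  have hs := Real.sqrt_pos.mpr ht
  have h1 : Real.sqrt (4 * Real.pi * t) ≤ 4 * Real.sqrt t := by
    rw [show 4 * Real.sqrt t = Real.sqrt (4^2 * t) by
      rw [Real.sqrt_mul (by norm_num), Real.sqrt_sq (by norm_num)]]
    apply Real.sqrt_le_sqrt
    nlinarith [Real.pi_lt_four]
  have h2 : (4 * Real.sqrt t)⁻¹ ≤ (Real.sqrt (4 * Real.pi * t))⁻¹ :=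
    inv_anti₀ (Real.sqrt_pos.mpr (by positivity)) h1
  have h3 : Real.exp (-1) ≤ Real.exp (-((x-y)^2) / (4*t)) := by
    apply Real.exp_le_exp.mpr
    have : (x-y)^2 ≤ t := by
      rw [← sq_abs, ← Real.sq_sqrt ht.le]
      exact pow_le_pow_left₀ (abs_nonneg _) hxy 2
    rw [le_div_iff₀ (by positivity)]; linarith
  calc Real.exp (-1) / 4 / Real.sqrt t = (4 * Real.sqrt t)⁻¹ * Real.exp (-1) := by field_simp
    _ ≤ _ := mul_le_mul h2 h3 (Real.exp_pos _).le (by positivity)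

lemma heat_low (g : ℝ → ℝ) (hg : ContinuousOn g (Set.Icc (-1) 1)) (c d r m0 : ℝ) (hr : 0 < r)
    (hc : -1 ≤ c - r) (hd : d + r ≤ 1) (hm : 0 < m0)
    (hgm : ∀ x ∈ Set.Icc (c - r) (d + r), m0 ≤ g x) :
    ∃ δ > 0, ∃ m > 0, ∀ t, 0 < t → t < δ → ∀ x ∈ Set.Icc c d,
      m ≤ ∫ x' in (-1:ℝ)..1, heatGamma x x' t * g x' := by
  obtain ⟨M, hM⟩ := isCompact_Icc.exists_bound_of_continuousOn hg
  have hM0 : 0 ≤ M := (norm_nonneg _).trans (hM 0 (by simp))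
  set N := (8 / r^2 * ∑' k : ℤ, 1 / (1 + (k:ℝ)^2)) * M with hN
  have hS0 : 0 ≤ ∑' k : ℤ, 1 / (1 + (k:ℝ)^2) := tsum_nonneg fun k => by positivity
  have hN0 : 0 ≤ N := by positivity
  set κ := Real.exp (-1) / 4 with hκ
  have hκ0 : 0 < κ := by positivity
  set ρ := min r (m0 * κ / (2 * N + 1)) with hρ
  have hρ0 : 0 < ρ := lt_min hr (by positivity)
  refine ⟨ρ^2, by positivity, m0 * κ, by positivity, ?_⟩
  intro t ht htδ x hx
  set q := Real.sqrt t with hq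
  have hq0 : 0 < q := Real.sqrt_pos.mpr ht
  have hqρ : q < ρ := by
    rw [hq, Real.sqrt_lt' hρ0]; exact htδ
  have hqr : q < r := lt_of_lt_of_le hqρ (min_le_left _ _)
  have hqN : N * q * 2 ≤ m0 * κ := by
    have : q ≤ m0 * κ / (2 * N + 1) := hqρ.le.trans (min_le_right _ _)
    rw [le_div_iff₀ (by positivity)] at this
    nlinarith
  have hcont : ContinuousOn (fun y => heatGamma x y t * g y) (Set.Icc (-1) 1) :=
    (gam_cont x ht).continuousOn.mul hg
  have hx1 : -1 ≤ x - q := by linarith [hx.1]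
  have hx2 : x + q ≤ 1 := by linarith [hx.2]
  have hii : ∀ u v, -1 ≤ u → u ≤ v → v ≤ 1 → IntervalIntegrable (fun y => heatGamma x y t * g y) volume u v := by
    intro u v h1 h2 h3
    apply ContinuousOn.intervalIntegrable
    rw [Set.uIcc_of_le h2]
    exact hcont.mono (Set.Icc_subset_Icc h1 h3)
  have hout : ∀ y ∈ Set.Icc (-1:ℝ) 1, -(N * q) ≤ heatGamma x y t * g y := by
    intro y hy
    rcases le_or_gt r |x - y| with h | h
    · have h1 := gam_far r x y t hr (by rw [abs_le]; constructor <;> linarith [hx.1, hx.2]) (abs_le.mpr hy) h ht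
      have h2 := gam_nonneg x y t
      have h3 : |heatGamma x y t * g y| ≤ N * q := by
        rw [abs_mul, abs_of_nonneg h2]
        calc _ ≤ ((8 / r^2 * ∑' k : ℤ, 1 / (1 + (k:ℝ)^2)) * q) * M :=
              mul_le_mul h1 (hM y hy) (abs_nonneg _) (by positivity)
          _ = _ := by rw [hN]; ring
      linarith [(abs_le.mp h3).1]
    · have h' := abs_lt.mp h
      have h1 := hgm y ⟨by linarith [hx.1], by linarith [hx.2]⟩
      have : 0 ≤ heatGamma x y t * g y := mul_nonneg (gam_nonneg _ _ _) (by linarith)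
      have : 0 ≤ N * q := by positivity
      linarith
  have hin : ∀ y ∈ Set.Icc (x - q) (x + q), m0 * (κ / q) ≤ heatGamma x y t * g y := by
    intro y hy
    have h1 := hgm y ⟨by linarith [hx.1, hy.1], by linarith [hx.2, hy.2]⟩
    have h2 := gam_near x y t (by rw [abs_le]; constructor <;> linarith [hy.1, hy.2]) ht
    rw [mul_comm]
    exact mul_le_mul h2 h1 hm.le (gam_nonneg _ _ _)
  have i1 := intervalIntegral.integral_mono_on (by linarith) (intervalIntegrable_const (c := -(N*q)))
    (hii (-1) (x - q) le_rfl hx1 (by linarith)) (fun y hy => hout y ⟨hy.1, by linarith [hy.2]⟩)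
  have i2 := intervalIntegral.integral_mono_on (by linarith) (intervalIntegrable_const (c := m0 * (κ / q)))
    (hii (x - q) (x + q) hx1 (by linarith) hx2) hin
  have i3 := intervalIntegral.integral_mono_on (by linarith) (intervalIntegrable_const (c := -(N*q)))
    (hii (x + q) 1 (by linarith) hx2 le_rfl) (fun y hy => hout y ⟨by linarith [hy.1], hy.2⟩)
  rw [← intervalIntegral.integral_add_adjacent_intervals (b := x + q)
    (hii (-1) (x+q) le_rfl (by linarith) hx2) (hii (x + q) 1 (by linarith) hx2 le_rfl),
    ← intervalIntegral.integral_add_adjacent_intervals (b := x - q)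
    (hii (-1) (x-q) le_rfl (by linarith) (by linarith)) (hii (x - q) (x+q) hx1 (by linarith) hx2)]
  simp only [intervalIntegral.integral_const, smul_eq_mul] at i1 i2 i3
  have e2 : (x + q - (x - q)) * (m0 * (κ / q)) = 2 * (m0 * κ) := by field_simp; ring
  rw [e2] at i2
  have hNq : 0 ≤ N * q := by positivity
  nlinarith

lemma gam_meas : Measurable (fun q : ℝ × ℝ × ℝ => heatGamma q.1 q.2.1 q.2.2) := by
  refine measurable_of_tendsto_metrizable' (Filter.atTop : Filter (Finset ℤ))
    (f := fun (S : Finset ℤ) (q : ℝ × ℝ × ℝ) => ∑ k ∈ S, heatK (q.1 - (2 * (k : ℝ) + (-1 : ℝ) ^ k.natAbs * q.2.1)) q.2.2)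
    (fun S => ?_) ?_
  · refine Finset.measurable_fun_sum _ (fun k _ => ?_)
    unfold heatK
    fun_prop
  · rw [tendsto_pi_nhds]
    intro q
    exact (gam_image q.1 q.2.1 q.2.2).summable.hasSum

lemma gam_cont' (y : ℝ) {τ : ℝ} (h : 0 < τ) : Continuous (fun x => heatGamma x y τ) := by
  have : (fun x => heatGamma x y τ) = fun x => heatGamma y x τ := by
    funext x; exact gam_symm x y h
  rw [this]
  exact gam_cont y h

lemma R_bound (φ : ℝ → ℝ) (hφ : Continuous φ) (M C c d : ℝ) (hM : ∀ x, |φ x| ≤ M)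
    (hcd : c ≤ d) (hc : -1 ≤ c) (hd : d ≤ 1)
    (hC : ∀ A B τ, 0 < τ → |∫ x in c..d, φ x * QQ x A B τ| ≤ C)
    (p b lam w : ℝ → ℝ) (t : ℝ) (ht : 0 < t)
    (hw : ∀ s, w s = 2 * Real.sin (ang (p s)) * Real.sin (Real.pi * b s / 2))
    (hp : AEMeasurable p (volume.restrict (Set.Ioo 0 t)))
    (hb : AEMeasurable b (volume.restrict (Set.Ioo 0 t)))
    (hl : AEStronglyMeasurable lam (volume.restrict (Set.Ioo 0 t)))
    (hl2 : IntegrableOn lam (Set.Ioc (t/2) t))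
    (hwl : IntegrableOn (fun s => w s * lam s) (Set.Ioo 0 t)) :
    IntervalIntegrable (fun x => φ x * ∫ s in (0:ℝ)..t,
      (heatGamma x (p s - b s) (t - s) - heatGamma x (p s + b s) (t - s)) * lam s) volume c d ∧
    |∫ x in c..d, φ x * ∫ s in (0:ℝ)..t,
      (heatGamma x (p s - b s) (t - s) - heatGamma x (p s + b s) (t - s)) * lam s| ≤
      C * ∫ s in Set.Ioo 0 t, |w s * lam s| := by
  have hM0 : 0 ≤ M := (abs_nonneg _).trans (hM 0)
  set μ := volume.restrict (Set.Ioc c d) with hμ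
  set ν := volume.restrict (Set.Ioo 0 t) with hν
  set g : ℝ → ℝ → ℝ := fun x s =>
    φ x * ((heatGamma x (p s - b s) (t - s) - heatGamma x (p s + b s) (t - s)) * lam s) with hg
  have hmeas : AEStronglyMeasurable (Function.uncurry g) (μ.prod ν) := by
    have hp2 : AEMeasurable (fun z : ℝ × ℝ => p z.2) (μ.prod ν) := hp.comp_snd
    have hb2 : AEMeasurable (fun z : ℝ × ℝ => b z.2) (μ.prod ν) := hb.comp_snd
    have hl3 : AEMeasurable (fun z : ℝ × ℝ => lam z.2) (μ.prod ν) := hl.aemeasurable.comp_snd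
    have m1 : AEMeasurable (fun z : ℝ × ℝ => heatGamma z.1 (p z.2 - b z.2) (t - z.2)) (μ.prod ν) :=
      gam_meas.comp_aemeasurable (f := fun z : ℝ × ℝ => (z.1, p z.2 - b z.2, t - z.2))
        (measurable_fst.aemeasurable.prodMk ((hp2.sub hb2).prodMk (by fun_prop)))
    have m2 : AEMeasurable (fun z : ℝ × ℝ => heatGamma z.1 (p z.2 + b z.2) (t - z.2)) (μ.prod ν) :=
      gam_meas.comp_aemeasurable (f := fun z : ℝ × ℝ => (z.1, p z.2 + b z.2, t - z.2))
        (measurable_fst.aemeasurable.prodMk ((hp2.add hb2).prodMk (by fun_prop)))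
    have m3 : AEMeasurable (fun z : ℝ × ℝ => φ z.1) (μ.prod ν) :=
      (hφ.measurable.comp measurable_fst).aemeasurable
    exact (m3.mul ((m1.sub m2).mul hl3)).aestronglyMeasurable
  have hgc : ∀ s ∈ Set.Ioo 0 t, Continuous (fun x => g x s) := by
    intro s hs
    have hτ : 0 < t - s := by linarith [hs.2]
    exact hφ.mul (((gam_cont' _ hτ).sub (gam_cont' _ hτ)).mul continuous_const)
  set Ct := ∑' n : ℕ, (n:ℝ)^2 * ee (t/2) n with hCt
  have hCt0 : 0 ≤ Ct := tsum_nonneg fun n => mul_nonneg (by positivity) (ee_pos _ _).le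
  have hgw : ∀ s ∈ Set.Ioo 0 t, ∀ x, g x s =
      (w s * lam s) * (φ x * QQ x (ang (p s)) (Real.pi * b s / 2) (t - s)) := by
    intro s hs x
    have hτ : 0 < t - s := by linarith [hs.2]
    simp only [hg]
    rw [gdiff _ _ _ hτ, hw]; ring
  have hbound : ∀ s ∈ Set.Ioo 0 t, ∫ x, ‖g x s‖ ∂μ ≤
      (M * Ct * (d - c)) * |w s * lam s| + (Set.Ioc (t/2) t).indicator (fun s => 2 * M * |lam s|) s := by
    intro s hs
    have hτ : 0 < t - s := by linarith [hs.2]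
    rw [hμ, ← intervalIntegral.integral_of_le hcd]
    rcases le_or_gt s (t/2) with h | h
    · have hn : s ∉ Set.Ioc (t/2) t := fun hh => absurd hh.1 (not_lt.mpr h)
      rw [Set.indicator_of_notMem hn, add_zero]
      have := intervalIntegral.integral_mono_on (μ := volume) hcd ((hgc s hs).norm.intervalIntegrable c d)
        (intervalIntegrable_const (c := M * Ct * |w s * lam s|)) (fun x _ => by
          rw [hgw s hs x, Real.norm_eq_abs, abs_mul, mul_comm, abs_mul (φ x)]
          exact mul_le_mul_of_nonneg_right (mul_le_mul (hM x)
            (QQ_bd _ _ _ (by positivity) (by linarith)) (abs_nonneg _) hM0) (abs_nonneg _))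
      rw [intervalIntegral.integral_const, smul_eq_mul] at this
      linarith
    · have hmm : s ∈ Set.Ioc (t/2) t := ⟨h, hs.2.le⟩
      rw [Set.indicator_of_mem hmm]
      have hmass : ∀ y, ∫ x in c..d, heatGamma x y (t - s) ≤ 1 := by
        intro y
        rw [← gam_mass y hτ]
        exact intervalIntegral.integral_mono_interval hc hcd hd
          (Filter.Eventually.of_forall fun x => gam_nonneg _ _ _) ((gam_cont' y hτ).intervalIntegrable _ _)
      have h1 := intervalIntegral.integral_mono_on (μ := volume) hcd ((hgc s hs).norm.intervalIntegrable c d)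
        (g := fun x => M * |lam s| * (heatGamma x (p s - b s) (t - s) + heatGamma x (p s + b s) (t - s)))
        ((((gam_cont' _ hτ).add (gam_cont' _ hτ)).const_mul _).intervalIntegrable c d)
        (fun x _ => by
          simp only [hg]
          rw [norm_mul, norm_mul]
          have e := abs_sub (heatGamma x (p s - b s) (t - s)) (heatGamma x (p s + b s) (t - s))
          rw [abs_of_nonneg (gam_nonneg _ _ _), abs_of_nonneg (gam_nonneg _ _ _)] at e
          calc _ ≤ M * ((heatGamma x (p s - b s) (t - s) + heatGamma x (p s + b s) (t - s)) * |lam s|) :=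
                mul_le_mul (hM x) (mul_le_mul_of_nonneg_right e (abs_nonneg _)) (by positivity) hM0
            _ = _ := by ring)
      rw [intervalIntegral.integral_const_mul, intervalIntegral.integral_add
        ((gam_cont' _ hτ).intervalIntegrable _ _) ((gam_cont' _ hτ).intervalIntegrable _ _)] at h1
      have h2 := mul_le_mul_of_nonneg_left (add_le_add (hmass (p s - b s)) (hmass (p s + b s)))
        (mul_nonneg hM0 (abs_nonneg (lam s)))
      have h3 : 0 ≤ (M * Ct * (d - c)) * |w s * lam s| := by
        have : 0 ≤ d - c := by linarith
        positivity
      linarith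
  have hint : Integrable (Function.uncurry g) (μ.prod ν) := by
    rw [integrable_prod_iff' hmeas]
    constructor
    · filter_upwards [ae_restrict_mem measurableSet_Ioo] with s hs
      exact (hgc s hs).integrableOn_Ioc
    · have hD : Integrable (fun s => (M * Ct * (d - c)) * |w s * lam s| +
          (Set.Ioc (t/2) t).indicator (fun s => 2 * M * |lam s|) s) ν := by
        refine (hwl.abs.const_mul _).add ?_
        exact (IntegrableOn.integrable_indicator (hl2.abs.const_mul _) measurableSet_Ioc).integrableOn
      refine hD.mono' hmeas.norm.prod_swap.integral_prod_right' ?_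
      filter_upwards [ae_restrict_mem measurableSet_Ioo] with s hs
      rw [Real.norm_of_nonneg (integral_nonneg fun x => norm_nonneg _)]
      exact hbound s hs
  have hR : ∀ x, (φ x * ∫ s in (0:ℝ)..t,
      (heatGamma x (p s - b s) (t - s) - heatGamma x (p s + b s) (t - s)) * lam s) = ∫ s, g x s ∂ν := by
    intro x
    rw [intervalIntegral.integral_of_le ht.le, integral_Ioc_eq_integral_Ioo, ← integral_const_mul]
  simp only [hR]
  constructor
  · rw [intervalIntegrable_iff_integrableOn_Ioc_of_le hcd]
    exact hint.integral_prod_left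
  · rw [intervalIntegral.integral_of_le hcd, integral_integral_swap hint, ← integral_const_mul,
      ← Real.norm_eq_abs]
    refine norm_integral_le_of_norm_le (hwl.abs.const_mul C) ?_
    filter_upwards [ae_restrict_mem measurableSet_Ioo] with s hs
    have hτ : 0 < t - s := by linarith [hs.2]
    simp only [hgw s hs]
    rw [integral_const_mul, hμ, ← intervalIntegral.integral_of_le hcd, norm_mul, mul_comm]
    exact mul_le_mul_of_nonneg_right (hC _ _ _ hτ) (abs_nonneg _)

lemma keyM {T a : ℝ} {fI : ℝ → ℝ} {f : ℝ → ℝ → ℝ} {p : ℝ → ℝ} (hT : 0 < T) (ha : 0 < a)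
    (ha1 : a < 1)
    (hfI : ContinuousOn fI (Set.Icc (-1) 1))
    (hsol : IsSolutionP a fI (Set.Ioc 0 T) f p) (σ c d r m0 : ℝ) (hσ : σ = 1 ∨ σ = -1)
    (hcd : c < d) (hr : 0 < r) (hc : -1 ≤ c - r) (hd : d + r ≤ 1) (hm : 0 < m0)
    (hfm : ∀ x ∈ Set.Icc (c - r) (d + r), m0 ≤ σ * fI x) :
    ∃ δ > 0, ∀ t ∈ Set.Ioc 0 T, t < δ → ∃ x ∈ Set.Ioo c d, 0 ≤ σ * f x t := by
  obtain ⟨δ1, hδ1, m, hm', hlow⟩ := heat_low (fun x => σ * fI x) (continuousOn_const.mul hfI)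
    c d r m0 hr hc hd hm hfm
  have hH : ∀ x t, ∫ x' in (-1:ℝ)..1, heatGamma x x' t * (σ * fI x') =
      σ * ∫ x' in (-1:ℝ)..1, heatGamma x x' t * fI x' := by
    intro x t
    rw [← intervalIntegral.integral_const_mul]
    congr 1; funext y; ring
  simp only [hH] at hlow
  set lam := flux f p with hlam
  set b := abar a p with hb
  set w : ℝ → ℝ := fun s => 2 * Real.sin (ang (p s)) * Real.sin (Real.pi * b s / 2) with hw
  have hbc : ContinuousOn b (Set.Ioc 0 T) := by
    have := hsol.p_cont
    rw [hb]
    have e : abar a p = fun s => min a (min (1 - p s) (1 + p s)) := rfl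
    rw [e]
    exact continuousOn_const.inf ((continuousOn_const.sub this).inf (continuousOn_const.add this))
  have hwc : ContinuousOn w (Set.Ioc 0 T) := by
    have h1 := hsol.p_cont
    have h2 : Continuous ang := by unfold ang; fun_prop
    have h3 : ContinuousOn (fun s => ang (p s)) (Set.Ioc 0 T) := h2.comp_continuousOn h1
    exact ((continuousOn_const.mul (Real.continuous_sin.comp_continuousOn h3)).mul
      (Real.continuous_sin.comp_continuousOn ((continuousOn_const.mul hbc).div_const _)))
  have hw2 : ∀ s, |w s| ≤ 2 := by
    intro s
    simp only [hw]
    rw [abs_mul, abs_mul, abs_two]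
    have h1 := Real.abs_sin_le_one (ang (p s))
    have h2 := Real.abs_sin_le_one (Real.pi * b s / 2)
    have h3 := mul_le_mul h1 h2 (abs_nonneg _) zero_le_one
    nlinarith
  have hlm : AEStronglyMeasurable lam (volume.restrict (Set.Ioc 0 T)) :=
    hsol.flux_loc_int.aestronglyMeasurable
  have hlc : ∀ t, 0 < t → IntegrableOn lam (Set.Icc t T) := fun t ht =>
    hsol.flux_loc_int.integrableOn_compact_subset (fun x hx => ⟨ht.trans_le hx.1, hx.2⟩) isCompact_Icc
  have hwlm : AEStronglyMeasurable (fun s => w s * lam s) (volume.restrict (Set.Ioc 0 T)) :=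
    (hwc.aestronglyMeasurable measurableSet_Ioc).mul hlm
  have hsub : ∀ {t}, t ≤ T → Set.Ioo 0 t ⊆ Set.Ioc 0 T := fun h x hx => ⟨hx.1, hx.2.le.trans h⟩
  by_cases hwl : IntegrableOn (fun s => w s * lam s) (Set.Ioc 0 T)
  · -- integrable case
    let φ : ContDiffBump ((c + d) / 2) := ⟨(d - c) / 4, (d - c) / 2, by linarith, by linarith⟩
    have hsupp : Function.support φ = Set.Ioo c d := by
      rw [φ.support_eq, Real.ball_eq_Ioo]
      change Set.Ioo ((c+d)/2 - (d-c)/2) ((c+d)/2 + (d-c)/2) = _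
      congr 1 <;> ring
    obtain ⟨C, hC0, hC⟩ := test_bd φ φ.contDiff φ.hasCompactSupport c d
      (by rw [hsupp]; exact Set.Ioo_subset_Ioc_self)
    have hφp : 0 < ∫ x in c..d, φ x := by
      apply intervalIntegral.intervalIntegral_pos_of_pos_on (φ.continuous.intervalIntegrable _ _) _ hcd
      intro x hx
      have : φ x ≠ 0 := by
        rw [← Function.mem_support, hsupp]; exact hx
      exact lt_of_le_of_ne φ.nonneg this.symm
    set G : ℝ → ℝ := (Set.Ioc 0 T).indicator (fun s => |w s * lam s|) with hG
    have hGi : Integrable G := IntegrableOn.integrable_indicator hwl.abs measurableSet_Ioc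
    have hGc : Continuous (fun t => ∫ s in (0:ℝ)..t, G s) := hGi.continuous_primitive 0
    have hpos : 0 < m * ∫ x in c..d, φ x := mul_pos hm' hφp
    have hev : ∀ᶠ t in nhds (0:ℝ), C * ∫ s in (0:ℝ)..t, G s < m * ∫ x in c..d, φ x := by
      have : Filter.Tendsto (fun t => C * ∫ s in (0:ℝ)..t, G s) (nhds 0) (nhds 0) := by
        have := (hGc.tendsto 0).const_mul C
        rwa [intervalIntegral.integral_same, mul_zero] at this
      exact this.eventually_lt_const hpos
    obtain ⟨δ2, hδ2, hsm⟩ := Metric.eventually_nhds_iff.mp hev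
    refine ⟨min δ1 δ2, lt_min hδ1 hδ2, fun t ht htδ => ?_⟩
    by_contra hcon
    push Not at hcon
    have ht1 : t < δ1 := htδ.trans_le (min_le_left _ _)
    have ht2 : t < δ2 := htδ.trans_le (min_le_right _ _)
    have hs := hsm (y := t) (by rw [Real.dist_eq, sub_zero, abs_of_pos ht.1]; exact ht2)
    have hGe : ∫ s in (0:ℝ)..t, G s = ∫ s in Set.Ioo 0 t, |w s * lam s| := by
      rw [intervalIntegral.integral_of_le ht.1.le, integral_Ioc_eq_integral_Ioo]
      refine setIntegral_congr_fun measurableSet_Ioo (fun s hs => ?_)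
      simp only [hG]
      rw [Set.indicator_of_mem (hsub ht.2 hs)]
    obtain ⟨R1, R2⟩ := R_bound φ φ.continuous 1 C c d
      (fun x => by rw [abs_of_nonneg φ.nonneg]; exact φ.le_one) hcd.le (by linarith) (by linarith)
      hC p b lam w t ht.1 (fun s => rfl)
      ((hsol.p_cont.mono (hsub ht.2)).aemeasurable measurableSet_Ioo)
      ((hbc.mono (hsub ht.2)).aemeasurable measurableSet_Ioo)
      (hlm.mono_measure (Measure.restrict_mono (hsub ht.2) le_rfl))
      ((hlc (t/2) (by linarith [ht.1])).mono_set (fun x hx => ⟨hx.1.le, hx.2.trans ht.2⟩))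
      (hwl.mono_set (hsub ht.2))
    have hmon : ∫ x in c..d, m * φ x ≤ ∫ x in c..d, (-σ) * (φ x * ∫ s in (0:ℝ)..t,
      (heatGamma x (p s - b s) (t - s) - heatGamma x (p s + b s) (t - s)) * lam s) := by
      refine intervalIntegral.integral_mono_on_of_le_Ioo hcd.le
        ((φ.continuous.const_mul _ |>.intervalIntegrable _ _)) (R1.const_mul _) (fun x hx => ?_)
      have h1 := hcon x hx
      rw [hsol.duhamel t ht x ⟨by linarith [hx.1], by linarith [hx.2]⟩] at h1
      have h2 := hlow t ht.1 ht1 x ⟨hx.1.le, hx.2.le⟩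
      rw [mul_add] at h1
      have h3 := mul_le_mul_of_nonneg_left (show m ≤ -(σ * ∫ s in (0:ℝ)..t,
        (heatGamma x (p s - b s) (t - s) - heatGamma x (p s + b s) (t - s)) * lam s) by linarith)
        (φ.nonneg (x := x))
      linarith
    rw [intervalIntegral.integral_const_mul, intervalIntegral.integral_const_mul] at hmon
    have h4 := le_abs_self ((-σ) * ∫ x in c..d, (φ x * ∫ s in (0:ℝ)..t,
      (heatGamma x (p s - b s) (t - s) - heatGamma x (p s + b s) (t - s)) * lam s))
    rw [abs_mul, show |(-σ)| = 1 by rcases hσ with h | h <;> simp [h], one_mul] at h4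
    rw [hGe] at hs
    linarith
  · -- non-integrable case
    refine ⟨δ1, hδ1, fun t ht htδ => ?_⟩
    have ht0 := ht.1
    by_contra hcon
    push Not at hcon
    apply hwl
    have hII : ∀ x ∈ Set.Ioo c d, IntervalIntegrable (fun s =>
        (heatGamma x (p s - b s) (t - s) - heatGamma x (p s + b s) (t - s)) * lam s) volume 0 t := by
      intro x hx
      by_contra hn
      have h1 := hcon x hx
      rw [hsol.duhamel t ht x ⟨by linarith [hx.1], by linarith [hx.2]⟩,
        intervalIntegral.integral_undef hn, add_zero] at h1
      linarith [hlow t ht.1 htδ x ⟨hx.1.le, hx.2.le⟩]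
    have hsb : Set.Ioc 0 (t/2) ⊆ Set.Ioc 0 T := fun s hs => ⟨hs.1, by linarith [hs.2, ht.2]⟩
    obtain ⟨g, hg, hgb⟩ := cover (Set.Ioc 0 (t/2)) w lam
      (fun s => (ang (p s), Real.pi * b s / 2, t - s))
      (Set.Icc (-Real.pi) 0 ×ˢ Set.Icc 0 Real.pi ×ˢ Set.Icc (t/2) t) (τ0 := t/2) (by linarith)
      (isCompact_Icc.prod (isCompact_Icc.prod isCompact_Icc)) (fun k hk => hk.2.2.1)
      (fun s hs => by
        have hp := hsol.p_mem s (hsb hs)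
        have hpi := Real.pi_pos
        have hb0 : 0 ≤ b s := le_min ha.le (le_min (by linarith [hp.2]) (by linarith [hp.1]))
        have hb1 : b s ≤ 1 := (min_le_left _ _).trans ha1.le
        refine ⟨⟨?_, ?_⟩, ⟨?_, ?_⟩, ⟨?_, ?_⟩⟩
        · simp only [ang]; nlinarith [hp.1]
        · simp only [ang]; nlinarith [hp.2]
        · simp only; positivity
        · simp only; nlinarith
        · simp only; linarith [hs.2]
        · simp only; linarith [hs.1])
      hcd (fun x hx => by
        have h1 := (intervalIntegrable_iff_integrableOn_Ioc_of_le ht0.le).mp (hII x hx)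
        have h2 := h1.mono_set (show Set.Ioc 0 (t/2) ⊆ Set.Ioc 0 t from
          fun s hs => ⟨hs.1, by linarith [hs.2]⟩)
        refine h2.congr_fun (fun s hs => ?_) measurableSet_Ioc
        simp only
        rw [gdiff _ _ _ (by linarith [hs.2])])
    have hA : IntegrableOn (fun s => w s * lam s) (Set.Ioc 0 (t/2)) := by
      refine Integrable.mono' hg (hwlm.mono_measure (Measure.restrict_mono hsb le_rfl)) ?_
      filter_upwards [ae_restrict_mem measurableSet_Ioc] with s hs
      exact hgb s hs
    have hB : IntegrableOn (fun s => w s * lam s) (Set.Ioc (t/2) T) := by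
      have hsb2 : Set.Ioc (t/2) T ⊆ Set.Ioc 0 T := fun s hs => ⟨by linarith [hs.1], hs.2⟩
      have h1 := (hlc (t/2) (by linarith)).mono_set (Set.Ioc_subset_Icc_self)
      refine Integrable.mono' (h1.abs.const_mul 2)
        (hwlm.mono_measure (Measure.restrict_mono hsb2 le_rfl)) (Filter.Eventually.of_forall fun s => ?_)
      rw [Real.norm_eq_abs, abs_mul]
      exact mul_le_mul_of_nonneg_right (hw2 s) (abs_nonneg _)
    have := hA.union hB
    rwa [Set.Ioc_union_Ioc_eq_Ioc (by linarith) (by linarith [ht.2])] at this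

/-- The rescue plan works (Corollary 3.2): the free boundary stays away from the
Neumann boundaries: there is `ε > 0` with `p(t) ∈ [−1+ε, 1−ε]` for all `t ∈ (0,T]`. -/
theorem statement12 (T a a₀ lamI : ℝ) (fI : ℝ → ℝ) (pI : ℝ)
    (f : ℝ → ℝ → ℝ) (p : ℝ → ℝ)
    (ha : a ∈ Set.Ioo (0:ℝ) 1) (ha₀ : 0 < a₀) (ha₀' : a₀ < a / 4)
    (hI : IsInitialDatum fI pI a₀ lamI)
    (hsol : IsSolutionP a fI (Set.Ioc 0 T) f p) :
    ∃ ε > (0:ℝ), ∀ t ∈ Set.Ioc (0:ℝ) T, p t ∈ Set.Icc (-1 + ε) (1 - ε) := by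
  rcases le_or_gt T 0 with hT | hT
  · exact ⟨1, one_pos, fun t ht => absurd (ht.1.trans_le ht.2) (not_lt.mpr hT)⟩
  have hfI := hI.smooth.continuousOn
  have hp1 := hI.pI_mem.1
  have hp2 := hI.pI_mem.2
  -- right side
  have hR : ∃ d < (1:ℝ), ∃ δ > 0, ∀ t ∈ Set.Ioc 0 T, t < δ → p t ≤ d := by
    set ρ := (1 - pI) / 5 with hρ
    have hρ0 : 0 < ρ := by rw [hρ]; linarith
    obtain ⟨m0, hm0, hmin⟩ := (isCompact_Icc (a := pI + 2 * ρ - ρ) (b := pI + 3 * ρ + ρ)).exists_forall_le'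
      (f := fun x => -1 * fI x) (a := 0)
      (continuousOn_const.mul (hfI.mono (fun x hx => ⟨by linarith [hx.1], by linarith [hx.2]⟩)))
      (fun x hx => by
        have := hI.neg_right x ⟨by linarith [hx.1], by linarith [hx.2]⟩
        linarith)
    obtain ⟨δ, hδ, h⟩ := keyM hT ha.1 ha.2 hfI hsol (-1) (pI + 2 * ρ) (pI + 3 * ρ) ρ m0 (Or.inr rfl)
      (by linarith) hρ0 (by linarith) (by linarith) hm0 hmin
    refine ⟨pI + 3 * ρ, by linarith, δ, hδ, fun t ht htδ => ?_⟩
    obtain ⟨x, hx, hfx⟩ := h t ht htδ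
    by_contra hlt
    push Not at hlt
    have := hsol.pos_left t ht x ⟨by linarith [hx.1], by linarith [hx.2]⟩
    linarith
  have hL : ∃ c > (-1:ℝ), ∃ δ > 0, ∀ t ∈ Set.Ioc 0 T, t < δ → c ≤ p t := by
    set ρ := (1 + pI) / 5 with hρ
    have hρ0 : 0 < ρ := by rw [hρ]; linarith
    obtain ⟨m0, hm0, hmin⟩ := (isCompact_Icc (a := pI - 3 * ρ - ρ) (b := pI - 2 * ρ + ρ)).exists_forall_le'
      (f := fun x => 1 * fI x) (a := 0)
      (continuousOn_const.mul (hfI.mono (fun x hx => ⟨by linarith [hx.1], by linarith [hx.2]⟩)))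
      (fun x hx => by
        have := hI.pos_left x ⟨by linarith [hx.1], by linarith [hx.2]⟩
        linarith)
    obtain ⟨δ, hδ, h⟩ := keyM hT ha.1 ha.2 hfI hsol 1 (pI - 3 * ρ) (pI - 2 * ρ) ρ m0 (Or.inl rfl)
      (by linarith) hρ0 (by linarith) (by linarith) hm0 hmin
    refine ⟨pI - 3 * ρ, by linarith, δ, hδ, fun t ht htδ => ?_⟩
    obtain ⟨x, hx, hfx⟩ := h t ht htδ
    by_contra hlt
    push Not at hlt
    have := hsol.neg_right t ht x ⟨by linarith [hx.1], by linarith [hx.2]⟩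
    linarith
  obtain ⟨d, hd, δ1, hδ1, h1⟩ := hR
  obtain ⟨c, hc, δ2, hδ2, h2⟩ := hL
  have hδ : 0 < min δ1 δ2 := lt_min hδ1 hδ2
  have hpc : ContinuousOn p (Set.Icc (min δ1 δ2) T) :=
    hsol.p_cont.mono (fun x hx => ⟨hδ.trans_le hx.1, hx.2⟩)
  obtain ⟨e1, he1, k1⟩ := (isCompact_Icc (a := min δ1 δ2) (b := T)).exists_forall_le'
      (f := fun t => 1 - p t) (a := 0) (continuousOn_const.sub hpc)
      (fun t ht => by linarith [(hsol.p_mem t ⟨hδ.trans_le ht.1, ht.2⟩).2])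
  obtain ⟨e2, he2, k2⟩ := (isCompact_Icc (a := min δ1 δ2) (b := T)).exists_forall_le'
      (f := fun t => 1 + p t) (a := 0) (continuousOn_const.add hpc)
      (fun t ht => by linarith [(hsol.p_mem t ⟨hδ.trans_le ht.1, ht.2⟩).1])
  refine ⟨min (min e1 e2) (min (1 - d) (1 + c)),
    lt_min (lt_min he1 he2) (lt_min (by linarith) (by linarith)), fun t ht => ?_⟩
  have a1 : min (min e1 e2) (min (1 - d) (1 + c)) ≤ e1 := (min_le_left _ _).trans (min_le_left _ _)
  have a2 : min (min e1 e2) (min (1 - d) (1 + c)) ≤ e2 := (min_le_left _ _).trans (min_le_right _ _)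
  have a3 : min (min e1 e2) (min (1 - d) (1 + c)) ≤ 1 - d := (min_le_right _ _).trans (min_le_left _ _)
  have a4 : min (min e1 e2) (min (1 - d) (1 + c)) ≤ 1 + c := (min_le_right _ _).trans (min_le_right _ _)
  rcases lt_or_ge t (min δ1 δ2) with h | h
  · have b1 := h1 t ht (h.trans_le (min_le_left _ _))
    have b2 := h2 t ht (h.trans_le (min_le_right _ _))
    constructor <;> linarith
  · have b1 := k1 t ⟨h, ht.2⟩
    have b2 := k2 t ⟨h, ht.2⟩
    constructor <;> linarith
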